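/- Let G and H be binary structures. If the rainbow relation algebra B_{G,H} is completely representable, then every partial homomorphism {(i,j),(i',j')} with i ≠ i' from G to H extends to a total homomorphism G → H. -/

import Mathlib

/-! ## Binary structures -/

/-- A binary structure: a carrier set together with a family of binary relations
indexed by a signature `σ` consisting of binary predicate symbols. -/
structure BinStruct (σ : Type) : Type 1 where
  V : Type
  rel : σ → V → V → Prop

variable {σ : Type}

/-- The partial map `{(i,j),(i',j')}` is a partial homomorphism from `G` to `H`:
for all distinct elements of the domain and every binary predicate, the predicate
is preserved. -/
def PartialHom2 (G H : BinStruct σ) (i i' : G.V) (j j' : H.V) : Prop :=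
  ∀ b : σ, (G.rel b i i' → H.rel b j j') ∧ (G.rel b i' i → H.rel b j' j)

/-- `f` is a (total) homomorphism from `G` to `H`. -/
def IsHom (G H : BinStruct σ) (f : G.V → H.V) : Prop :=
  ∀ (b : σ) (u v : G.V), u ≠ v → G.rel b u v → H.rel b (f u) (f v)

/-! ## The rainbow atom structure -/

/-- Atoms of the rainbow relation algebra `B_{G,H}`. -/
inductive RbAtom (α β : Type) : Type
  | id : RbAtom α β
  | black : RbAtom α β
  | white : RbAtom α β
  | yellow : RbAtom α β
  | green (i : α) : RbAtom α β
  | red (j j' : β) : RbAtom α β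

namespace RbAtom

/-- Converse of an atom: all atoms are self-converse except `(red j j')⌣ = red j' j`. -/
def conv {α β : Type} : RbAtom α β → RbAtom α β
  | red j j' => red j' j
  | a => a

end RbAtom

/-- The generating forbidden triples (I)–(VI) of the rainbow algebra `B_{G,H}`. -/
inductive BaseForbidden (G H : BinStruct σ) :
    RbAtom G.V H.V → RbAtom G.V H.V → RbAtom G.V H.V → Prop
  | ident (a b : RbAtom G.V H.V) : a ≠ b → BaseForbidden G H .id a b
  | ggg (i i' i'' : G.V) : BaseForbidden G H (.green i) (.green i') (.green i'')
  | ggw (i i' : G.V) : BaseForbidden G H (.green i) (.green i') .white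
  | yyy : BaseForbidden G H .yellow .yellow .yellow
  | yyb : BaseForbidden G H .yellow .yellow .black
  | rrr (j₁ j₂ j₂' j₃' j₁s j₃s : H.V) : ¬(j₁ = j₁s ∧ j₂ = j₂' ∧ j₃' = j₃s) →
      BaseForbidden G H (.red j₁ j₂) (.red j₂' j₃') (.red j₁s j₃s)
  | ggr (i i' : G.V) (j j' : H.V) : ¬(i ≠ i' ∧ PartialHom2 G H i i' j j') →
      BaseForbidden G H (.green i) (.green i') (.red j j')

/-- A triple of atoms is forbidden if it is a Peircean transform of one of the
generating forbidden triples. -/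
def Forbidden (G H : BinStruct σ) (a b c : RbAtom G.V H.V) : Prop :=
  ∃ x y z : RbAtom G.V H.V, BaseForbidden G H x y z ∧
    ((a, b, c) = (x, y, z) ∨ (a, b, c) = (x.conv, z, y) ∨ (a, b, c) = (z, y.conv, x) ∨
     (a, b, c) = (y.conv, x.conv, z.conv) ∨ (a, b, c) = (y, z.conv, x.conv) ∨
     (a, b, c) = (z.conv, x, y.conv))

/-! ## The rainbow relation algebra (complex algebra of the atom structure) -/

/-- Composition in the complex algebra: `c ≤ X ; Y` iff there are `a ∈ X`, `b ∈ Y`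
such that the triple `(a, b, c)` is not forbidden. -/
def rbComp (G H : BinStruct σ) (X Y : Set (RbAtom G.V H.V)) : Set (RbAtom G.V H.V) :=
  {c | ∃ a ∈ X, ∃ b ∈ Y, ¬ Forbidden G H a b c}

/-- Converse in the complex algebra. -/
def rbConv {α β : Type} (X : Set (RbAtom α β)) : Set (RbAtom α β) :=
  {a | RbAtom.conv a ∈ X}

/-- The rainbow relation algebra `B_{G,H}` is completely representable: there is an
isomorphism onto an algebra of binary relations on some base set (with union,
complement, relational composition, converse and the identity relation) carrying
all suprema to unions. -/
def CompletelyRepresentable (G H : BinStruct σ) : Prop :=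
  ∃ (X : Type) (θ : Set (RbAtom G.V H.V) → Set (X × X)),
    Function.Injective θ ∧
    (∀ S : Set (Set (RbAtom G.V H.V)), θ (⋃₀ S) = ⋃₀ (θ '' S)) ∧
    (∀ A : Set (RbAtom G.V H.V), θ Aᶜ = θ Set.univ \ θ A) ∧
    (∀ A B : Set (RbAtom G.V H.V),
        θ (rbComp G H A B) = {p : X × X | ∃ z : X, (p.1, z) ∈ θ A ∧ (z, p.2) ∈ θ B}) ∧
    (∀ A : Set (RbAtom G.V H.V), θ (rbConv A) = {p : X × X | (p.2, p.1) ∈ θ A}) ∧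
    θ {RbAtom.id} = {p : X × X | p.1 = p.2}

/-! ## The colouring game -/

/-- The set of vertices coloured (according to the interpretation `g`) with exactly
the colours in a palette `π`. -/
def PaletteSet {V : Type} {c : ℕ} (g : Fin c → Set V) (π : Set (Fin c)) : Set V :=
  {x | ∀ t : Fin c, x ∈ g t ↔ t ∈ π}

/-- The position `(g,h)` of the `c`-colour colouring game on `(G,H)` is an immediate
win for ∀: (C1) some palette is realised in exactly one of the two structures, or
(C2) some pair of palettes and binary predicate produce a nonempty intersection in
exactly one of the two structures. -/
def ColWin (G H : BinStruct σ) (c : ℕ)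
    (g : Fin c → Set G.V) (h : Fin c → Set H.V) : Prop :=
  (∃ π : Set (Fin c), Xor' (PaletteSet g π = ∅) (PaletteSet h π = ∅)) ∨
  (∃ (π π' : Set (Fin c)) (b : σ),
      Xor' ((PaletteSet g π ×ˢ PaletteSet g π') ∩ {q | G.rel b q.1 q.2} = ∅)
           ((PaletteSet h π ×ˢ PaletteSet h π') ∩ {q | H.rel b q.1 q.2} = ∅))

/-- `∃` has a winning strategy in the infinitely long `c`-colour colouring game
`G^c_ω(G,H)` starting from the position `(g,h)`: there is an invariant family of safe
positions containing `(g,h)`, avoiding wins for `∀`, such that every move of `∀`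
(a colour together with a set of vertices of either structure) has a response by `∃`
(a set of vertices of the other structure) staying in the family. -/
def ExSurvives (G H : BinStruct σ) (c : ℕ)
    (g : Fin c → Set G.V) (h : Fin c → Set H.V) : Prop :=
  ∃ Inv : (Fin c → Set G.V) → (Fin c → Set H.V) → Prop,
    Inv g h ∧
    (∀ g' h', Inv g' h' → ¬ ColWin G H c g' h') ∧
    (∀ g' h', Inv g' h' → ∀ (t : Fin c) (S : Set G.V), ∃ T : Set H.V,
        Inv (Function.update g' t S) (Function.update h' t T)) ∧
    (∀ g' h', Inv g' h' → ∀ (t : Fin c) (T : Set H.V), ∃ S : Set G.V,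
        Inv (Function.update g' t S) (Function.update h' t T))

/-- `∀` can force a win in the colouring game from the position `(g,h)`:
either the position is already a win for him, or he has a move such that
every response of `∃` leads to a position from which he can force a win. -/
inductive AllForcesWin (G H : BinStruct σ) (c : ℕ) :
    (Fin c → Set G.V) → (Fin c → Set H.V) → Prop
  | now (g h) : ColWin G H c g h → AllForcesWin G H c g h
  | moveG (g h) (t : Fin c) (S : Set G.V) :
      (∀ T : Set H.V,
        AllForcesWin G H c (Function.update g t S) (Function.update h t T)) →
      AllForcesWin G H c g h
  | moveH (g h) (t : Fin c) (T : Set H.V) :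
      (∀ S : Set G.V,
        AllForcesWin G H c (Function.update g t S) (Function.update h t T)) →
      AllForcesWin G H c g h

/-! ## Relation algebras, terms and formulas -/

/-- A relation algebra (Tarski's axioms): a Boolean algebra with an associative,
additive composition `;` with two-sided identity `1'`, and an additive involutive
converse satisfying the Peircean/Tarski axioms. -/
class RelationAlgebra (A : Type) extends BooleanAlgebra A where
  comp : A → A → A
  conv : A → A
  one' : A
  comp_assoc : ∀ x y z : A, comp (comp x y) z = comp x (comp y z)
  comp_one' : ∀ x : A, comp x one' = x
  one'_comp : ∀ x : A, comp one' x = x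
  sup_comp : ∀ x y z : A, comp (x ⊔ y) z = comp x z ⊔ comp y z
  comp_sup : ∀ x y z : A, comp x (y ⊔ z) = comp x y ⊔ comp x z
  conv_conv : ∀ x : A, conv (conv x) = x
  conv_sup : ∀ x y : A, conv (x ⊔ y) = conv x ⊔ conv y
  conv_comp : ∀ x y : A, conv (comp x y) = comp (conv y) (conv x)
  tarski : ∀ x y : A, comp (conv x) (comp x y)ᶜ ⊓ y = ⊥

/-- A relation algebra is representable (a member of RRA) if it is isomorphic to a
subalgebra of an algebra of binary relations on some base set, with union,
complement, relational composition, converse and the identity relation. -/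
def Representable (A : Type) [RelationAlgebra A] : Prop :=
  ∃ (X : Type) (θ : A → Set (X × X)),
    Function.Injective θ ∧
    (∀ a b : A, θ (a ⊔ b) = θ a ∪ θ b) ∧
    (∀ a : A, θ aᶜ = θ ⊤ \ θ a) ∧
    (∀ a b : A, θ (RelationAlgebra.comp a b) =
        {p : X × X | ∃ z : X, (p.1, z) ∈ θ a ∧ (z, p.2) ∈ θ b}) ∧
    (∀ a : A, θ (RelationAlgebra.conv a) = {p : X × X | (p.2, p.1) ∈ θ a}) ∧
    θ RelationAlgebra.one' = {p : X × X | p.1 = p.2}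

/-- A signature of relation-algebra operations on a carrier `A` (used to interpret
relation-algebra terms both in abstract relation algebras and in the concrete
rainbow complex algebras). -/
structure RAOps (A : Type) where
  bot : A
  top : A
  one' : A
  sup : A → A → A
  inf : A → A → A
  compl : A → A
  comp : A → A → A
  conv : A → A

/-- The operations of an abstract relation algebra. -/
def RAOps.ofClass (A : Type) [RelationAlgebra A] : RAOps A :=
  ⟨⊥, ⊤, RelationAlgebra.one', (· ⊔ ·), (· ⊓ ·), (·ᶜ), RelationAlgebra.comp,
    RelationAlgebra.conv⟩

/-- The operations of the rainbow complex algebra `B_{G,H}`. -/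
def rbOps (G H : BinStruct σ) : RAOps (Set (RbAtom G.V H.V)) :=
  ⟨∅, Set.univ, {RbAtom.id}, (· ∪ ·), (· ∩ ·), (·ᶜ), rbComp G H, rbConv⟩

/-- Terms in the language of relation algebras with variables `x_0, …, x_{c-1}`. -/
inductive RATerm (c : ℕ) : Type
  | var (i : Fin c) : RATerm c
  | bot : RATerm c
  | top : RATerm c
  | one' : RATerm c
  | sup (s t : RATerm c) : RATerm c
  | inf (s t : RATerm c) : RATerm c
  | compl (t : RATerm c) : RATerm c
  | comp (s t : RATerm c) : RATerm c
  | conv (t : RATerm c) : RATerm c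

namespace RATerm

variable {c : ℕ} {A : Type}

/-- Evaluation of a term under a total assignment of the variables. -/
def eval (ops : RAOps A) (v : Fin c → A) : RATerm c → A
  | var i => v i
  | bot => ops.bot
  | top => ops.top
  | one' => ops.one'
  | sup s t => ops.sup (s.eval ops v) (t.eval ops v)
  | inf s t => ops.inf (s.eval ops v) (t.eval ops v)
  | compl t => ops.compl (t.eval ops v)
  | comp s t => ops.comp (s.eval ops v) (t.eval ops v)
  | conv t => ops.conv (t.eval ops v)

/-- Evaluation of a term under a partial assignment of the variables; defined
just when every variable of the term lies in the domain of the assignment. -/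
def evalo (ops : RAOps A) (v : Fin c → Option A) : RATerm c → Option A
  | var i => v i
  | bot => some ops.bot
  | top => some ops.top
  | one' => some ops.one'
  | sup s t => (s.evalo ops v).bind fun a => (t.evalo ops v).map fun b => ops.sup a b
  | inf s t => (s.evalo ops v).bind fun a => (t.evalo ops v).map fun b => ops.inf a b
  | compl t => (t.evalo ops v).map ops.compl
  | comp s t => (s.evalo ops v).bind fun a => (t.evalo ops v).map fun b => ops.comp a b
  | conv t => (t.evalo ops v).map ops.conv

/-- The variables occurring in a term. -/
def vars : RATerm c → Finset (Fin c)
  | var i => {i}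
  | bot => ∅
  | top => ∅
  | one' => ∅
  | sup s t => s.vars ∪ t.vars
  | inf s t => s.vars ∪ t.vars
  | compl t => t.vars
  | comp s t => s.vars ∪ t.vars
  | conv t => t.vars

end RATerm

/-- First-order formulas in the language of relation algebras with variables
`x_0, …, x_{c-1}`. -/
inductive RAFormula (c : ℕ) : Type
  | eq (s t : RATerm c) : RAFormula c
  | not (φ : RAFormula c) : RAFormula c
  | and (φ ψ : RAFormula c) : RAFormula c
  | ex (i : Fin c) (φ : RAFormula c) : RAFormula c

namespace RAFormula

variable {c : ℕ} {A : Type}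

/-- Quantifier depth of a formula. -/
def qd : RAFormula c → ℕ
  | eq _ _ => 0
  | not φ => φ.qd
  | and φ ψ => max φ.qd ψ.qd
  | ex _ φ => φ.qd + 1

/-- Free variables of a formula. -/
def freeVars : RAFormula c → Finset (Fin c)
  | eq s t => s.vars ∪ t.vars
  | not φ => φ.freeVars
  | and φ ψ => φ.freeVars ∪ ψ.freeVars
  | ex i φ => φ.freeVars \ {i}

/-- Satisfaction of a formula under a total assignment of the variables. -/
def Sat (ops : RAOps A) (v : Fin c → A) : RAFormula c → Prop
  | eq s t => s.eval ops v = t.eval ops v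
  | not φ => ¬ Sat ops v φ
  | and φ ψ => Sat ops v φ ∧ Sat ops v ψ
  | ex i φ => ∃ a : A, Sat ops (Function.update v i a) φ

end RAFormula

/-! ## The pebble equivalence game on relation algebras -/

/-- The position `(α,β)` of the pebble game is good for `∃`: the two partial maps have
the same domain and the correspondence `t^α ↦ t^β` between the generated subalgebras
(given by evaluating terms whose variables lie in the common domain) is a well-defined
isomorphism. -/
def GoodPos {A B : Type} (opsA : RAOps A) (opsB : RAOps B) (c : ℕ)
    (α : Fin c → Option A) (β : Fin c → Option B) : Prop :=
  (∀ i : Fin c, (α i).isSome ↔ (β i).isSome) ∧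
  ∀ s t : RATerm c,
    (s.evalo opsA α = t.evalo opsA α ↔ s.evalo opsB β = t.evalo opsB β)

/-- `∃` has a winning strategy in the `c`-pebble, `n`-round equivalence game
`Γ^c_n(A, α, B, β)` (for finite `n`). -/
def ExWinsPebble {A B : Type} (opsA : RAOps A) (opsB : RAOps B) (c : ℕ) :
    ℕ → (Fin c → Option A) → (Fin c → Option B) → Prop
  | 0, α, β => GoodPos opsA opsB c α β
  | n + 1, α, β => GoodPos opsA opsB c α β ∧
      (∀ (t : Fin c) (a : A), ∃ b : B,
        ExWinsPebble opsA opsB c n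
          (Function.update α t (some a)) (Function.update β t (some b))) ∧
      (∀ (t : Fin c) (b : B), ∃ a : A,
        ExWinsPebble opsA opsB c n
          (Function.update α t (some a)) (Function.update β t (some b)))

/-- `∃` has a winning strategy in the infinitely long `c`-pebble equivalence game
`Γ^c_ω(A, α, B, β)`. -/
def ExWinsPebbleOmega {A B : Type} (opsA : RAOps A) (opsB : RAOps B) (c : ℕ)
    (α : Fin c → Option A) (β : Fin c → Option B) : Prop :=
  ∃ Inv : (Fin c → Option A) → (Fin c → Option B) → Prop,
    Inv α β ∧
    (∀ α' β', Inv α' β' → GoodPos opsA opsB c α' β') ∧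
    (∀ α' β', Inv α' β' → ∀ (t : Fin c) (a : A), ∃ b : B,
        Inv (Function.update α' t (some a)) (Function.update β' t (some b))) ∧
    (∀ α' β', Inv α' β' → ∀ (t : Fin c) (b : B), ∃ a : A,
        Inv (Function.update α' t (some a)) (Function.update β' t (some b)))

/-- `∃` has a winning strategy in the `c`-pebble, `n`-round equivalence game, where
`n ≤ ω` (`n : ℕ∞`). -/
def ExWinsPebbleE {A B : Type} (opsA : RAOps A) (opsB : RAOps B) (c : ℕ)
    (n : ℕ∞) (α : Fin c → Option A) (β : Fin c → Option B) : Prop :=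
  match n with
  | ⊤ => ExWinsPebbleOmega opsA opsB c α β
  | (m : ℕ) => ExWinsPebble opsA opsB c m α β

/-! ## The mirroring strategy -/

/-- The set of green subscripts of an element of a rainbow algebra. -/
def greenPart {V F : Type} (x : Set (RbAtom V F)) : Set V := {i | RbAtom.green i ∈ x}

/-- The element of the other rainbow algebra with the same non-green part as `x` and
green part determined by `Y`. -/
def mirrorElt {V W F : Type} (x : Set (RbAtom V F)) (Y : Set W) : Set (RbAtom W F) :=
  fun a => match a with
  | RbAtom.green j => j ∈ Y
  | RbAtom.id => RbAtom.id ∈ x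
  | RbAtom.black => RbAtom.black ∈ x
  | RbAtom.white => RbAtom.white ∈ x
  | RbAtom.yellow => RbAtom.yellow ∈ x
  | RbAtom.red j j' => RbAtom.red j j' ∈ x

/-- Inclusion of the first `c` colours into the `c+3` colours of the parallel game. -/
def liftCol {c : ℕ} (t : Fin c) : Fin (c + 3) := Fin.castLE (Nat.le_add_right c 3) t

/-- A combined state of a play of the pebble game `Γ^c(B_{G,F}, B_{H,F})` together
with the parallel play of the colouring game `G^{c+3}_ω(G,H)`, recording also the
set of colours used so far. -/
structure MirrorState (c : ℕ) (G H F : BinStruct σ) : Type where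
  α : Fin c → Option (Set (RbAtom G.V F.V))
  β : Fin c → Option (Set (RbAtom H.V F.V))
  g : Fin (c + 3) → Set G.V
  h : Fin (c + 3) → Set H.V
  used : Set (Fin (c + 3))

/-- The initial state: no pebbles placed, all vertices uncoloured, no colour used. -/
def mirrorInit (c : ℕ) (G H F : BinStruct σ) : MirrorState c G H F :=
  ⟨fun _ => none, fun _ => none, fun _ => ∅, fun _ => ∅, ∅⟩

/-- `Inv` is a winning invariant witnessing a winning strategy for `∃` in the
colouring game `G^c_ω(G,H)` (from the initial position). -/
def IsColInvariant (G H : BinStruct σ) (c : ℕ)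
    (Inv : (Fin c → Set G.V) → (Fin c → Set H.V) → Prop) : Prop :=
  Inv (fun _ => ∅) (fun _ => ∅) ∧
  (∀ g h, Inv g h → ¬ ColWin G H c g h) ∧
  (∀ g h, Inv g h → ∀ (t : Fin c) (S : Set G.V), ∃ T : Set H.V,
      Inv (Function.update g t S) (Function.update h t T)) ∧
  (∀ g h, Inv g h → ∀ (t : Fin c) (T : Set H.V), ∃ S : Set G.V,
      Inv (Function.update g t S) (Function.update h t T))

/-- One round of the pebble game `Γ^c(B_{G,F}, B_{H,F})` in which `∃` plays the
mirroring strategy induced by the colouring-game winning strategy witnessed by the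
invariant `Inv`: when `∀` plays pebble `t` on an element of one algebra, `∃` colours
the set of its green subscripts with colour `t` in the parallel colouring game,
obtains a response keeping the parallel play inside `Inv`, and answers with the
element with identical non-green part and green part determined by that response. -/
inductive MirrorStep (G H F : BinStruct σ) (c : ℕ)
    (Inv : (Fin (c + 3) → Set G.V) → (Fin (c + 3) → Set H.V) → Prop) :
    MirrorState c G H F → MirrorState c G H F → Prop
  | fromG (s : MirrorState c G H F) (t : Fin c) (x : Set (RbAtom G.V F.V)) (Y : Set H.V) :
      Inv (Function.update s.g (liftCol t) (greenPart x))
          (Function.update s.h (liftCol t) Y) →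
      MirrorStep G H F c Inv s
        ⟨Function.update s.α t (some x),
         Function.update s.β t (some (mirrorElt x Y)),
         Function.update s.g (liftCol t) (greenPart x),
         Function.update s.h (liftCol t) Y,
         insert (liftCol t) s.used⟩
  | fromH (s : MirrorState c G H F) (t : Fin c) (y : Set (RbAtom H.V F.V)) (X : Set G.V) :
      Inv (Function.update s.g (liftCol t) X)
          (Function.update s.h (liftCol t) (greenPart y)) →
      MirrorStep G H F c Inv s
        ⟨Function.update s.α t (some (mirrorElt y X)),
         Function.update s.β t (some y),
         Function.update s.g (liftCol t) X,
         Function.update s.h (liftCol t) (greenPart y),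
         insert (liftCol t) s.used⟩

/-- The states reachable in a play of the pebble game `Γ^c(B_{G,F}, B_{H,F})`
during which `∃` plays using the mirroring strategy. -/
def MirrorReachable (G H F : BinStruct σ) (c : ℕ)
    (Inv : (Fin (c + 3) → Set G.V) → (Fin (c + 3) → Set H.V) → Prop)
    (s : MirrorState c G H F) : Prop :=
  Relation.ReflTransGen (MirrorStep G H F c Inv) (mirrorInit c G H F) s

/-!
Work with the atoms labelling the pairs of a complete representation, and choose a pair `(u, v)`
labelled `red j j'`. The triangle `(green i, green i', red j j')` puts a point `p` over this pair,
the triangle `(yellow, yellow, red j j')` a point `q`. As `(green k, yellow, c)` is consistent for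
every `c ≠ id`, each `k` has a point `z k` with `green k` from `p` and `yellow` to `q`; take
`z i = u` and `z i' = v`. An edge between two such points closes both a green and a yellow triangle,
hence is red; consistency of red triangles makes its subscripts depend on its endpoints only, and
consistency of green-green-red triangles makes this assignment of subscripts a homomorphism.
-/

theorem PartialHom2.symm {G H : BinStruct σ} {i i' : G.V} {j j' : H.V}
    (h : PartialHom2 G H i i' j j') : PartialHom2 G H i' i j' j :=
  fun b => (h b).symm

namespace RbAtom

theorem conv_conv {α β : Type} (a : RbAtom α β) : a.conv.conv = a := by
  cases a <;> rfl

theorem conv_injective {α β : Type} : Function.Injective (conv : RbAtom α β → RbAtom α β) :=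
  Function.LeftInverse.injective conv_conv

end RbAtom

theorem rbConv_singleton_conv {α β : Type} (a : RbAtom α β) : rbConv {a.conv} = {a} :=
  Set.ext fun _ => RbAtom.conv_injective.eq_iff

section Forbidden

variable {G H : BinStruct σ}

theorem forbidden_iff {a b c : RbAtom G.V H.V} :
    Forbidden G H a b c ↔
      BaseForbidden G H a b c ∨ BaseForbidden G H a.conv c b ∨ BaseForbidden G H c b.conv a ∨
      BaseForbidden G H b.conv a.conv c.conv ∨ BaseForbidden G H c.conv a b.conv ∨
      BaseForbidden G H b c.conv a.conv := by
  simp only [Forbidden, Prod.mk.injEq]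
  constructor
  · rintro ⟨x, y, z, hxyz, h⟩
    rcases h with ⟨rfl, rfl, rfl⟩ | ⟨rfl, rfl, rfl⟩ | ⟨rfl, rfl, rfl⟩ | ⟨rfl, rfl, rfl⟩ |
      ⟨rfl, rfl, rfl⟩ | ⟨rfl, rfl, rfl⟩ <;> simp only [RbAtom.conv_conv, hxyz, true_or, or_true]
  · rintro (h | h | h | h | h | h) <;>
      exact ⟨_, _, _, h, by simp only [RbAtom.conv_conv, and_self, true_or, or_true]⟩

theorem BaseForbidden.forbidden {a b c : RbAtom G.V H.V} (h : BaseForbidden G H a b c) :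
    Forbidden G H a b c :=
  ⟨a, b, c, h, .inl rfl⟩

theorem forbidden_id_right {a b : RbAtom G.V H.V} (h : a ≠ b.conv) : Forbidden G H a b .id :=
  forbidden_iff.2 <| .inr <| .inr <| .inl <| .ident _ _ h.symm

theorem mem_rbComp_singleton {a b c : RbAtom G.V H.V} :
    c ∈ rbComp G H {a} {b} ↔ ¬ Forbidden G H a b c := by
  simp only [rbComp, Set.mem_singleton_iff, exists_eq_left, Set.mem_ofPred_eq]

theorem not_forbidden_green_green_red_iff {i i' : G.V} {j j' : H.V} :
    ¬ Forbidden G H (.green i) (.green i') (.red j j') ↔ i ≠ i' ∧ PartialHom2 G H i i' j j' := by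
  refine ⟨fun h => by_contra fun hn => h (BaseForbidden.ggr _ _ _ _ hn).forbidden, ?_⟩
  rintro ⟨hne, hp⟩ h
  rcases forbidden_iff.1 h with h | h | h | h | h | h <;> cases h
  case inl.ggr hn => exact hn ⟨hne, hp⟩
  case inr.inr.inr.inl.ggr hn => exact hn ⟨hne.symm, hp.symm⟩

theorem not_forbidden_yellow_yellow_red (j j' : H.V) :
    ¬ Forbidden G H .yellow .yellow (.red j j') := by
  intro h
  rcases forbidden_iff.1 h with h | h | h | h | h | h <;> cases h

theorem not_forbidden_green_yellow_iff {k : G.V} {c : RbAtom G.V H.V} :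
    ¬ Forbidden G H (.green k) .yellow c ↔ c ≠ .id := by
  refine ⟨fun h hc => h (hc ▸ forbidden_id_right nofun), fun hc h => ?_⟩
  rcases forbidden_iff.1 h with h | h | h | h | h | h <;> cases c <;>
    first | exact hc rfl | cases h

theorem eq_and_eq_and_eq_of_not_forbidden_red {a b c d e f : H.V}
    (h : ¬ Forbidden G H (.red a b) (.red c d) (.red e f)) : a = e ∧ b = c ∧ d = f :=
  by_contra fun hn => h (BaseForbidden.rrr _ _ _ _ _ _ hn).forbidden

theorem exists_eq_red_of_not_forbidden {k l : G.V} {c : RbAtom G.V H.V} (hkl : k ≠ l)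
    (hgreen : ¬ Forbidden G H (.green k) (.green l) c)
    (hyellow : ¬ Forbidden G H .yellow .yellow c) : ∃ j j', c = .red j j' := by
  cases c with
  | id => exact (hgreen (forbidden_id_right fun h => hkl (RbAtom.green.inj h))).elim
  | black => exact (hyellow BaseForbidden.yyb.forbidden).elim
  | white => exact (hgreen (BaseForbidden.ggw _ _).forbidden).elim
  | yellow => exact (hyellow BaseForbidden.yyy.forbidden).elim
  | green m => exact (hgreen (BaseForbidden.ggg _ _ _).forbidden).elim
  | red j j' => exact ⟨j, j', rfl⟩

end Forbidden

section MapSUnion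

variable {α β : Type*} {θ : Set α → Set β}

theorem mem_map_iff_exists_mem_map_singleton (hUnion : ∀ S, θ (⋃₀ S) = ⋃₀ (θ '' S))
    {A : Set α} {p : β} : p ∈ θ A ↔ ∃ a ∈ A, p ∈ θ {a} := by
  have hA : ⋃₀ ((fun a => ({a} : Set α)) '' A) = A := by
    rw [Set.sUnion_image, Set.biUnion_of_singleton]
  conv_lhs => rw [← hA, hUnion]
  rw [Set.image_image, Set.sUnion_image, Set.mem_iUnion₂]
  simp only [exists_prop]

theorem map_singleton_nonempty (hinj : Function.Injective θ)
    (hUnion : ∀ S, θ (⋃₀ S) = ⋃₀ (θ '' S)) (a : α) : (θ {a}).Nonempty := by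
  have hempty : θ ∅ = ∅ := by simpa only [Set.sUnion_empty, Set.image_empty] using hUnion ∅
  rw [Set.nonempty_iff_ne_empty, ← hempty]
  exact hinj.ne (Set.singleton_ne_empty a)

theorem eq_of_mem_map_singleton (hUnion : ∀ S, θ (⋃₀ S) = ⋃₀ (θ '' S))
    (hcompl : ∀ A, θ Aᶜ = θ Set.univ \ θ A) {a b : α} {p : β}
    (ha : p ∈ θ {a}) (hb : p ∈ θ {b}) : a = b := by
  by_contra hab
  have hp : p ∈ θ {a}ᶜ := (mem_map_iff_exists_mem_map_singleton hUnion).2 ⟨b, Ne.symm hab, hb⟩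
  exact (hcompl {a} ▸ hp).2 ha

end MapSUnion

/-- `L a x y` says that the pair `(x, y)` of base points of a complete representation of `B_{G,H}`
lies in the relation representing the atom `a`. As the unit of the representation need not be all
of `X × X`, some pairs may carry no label. -/
structure IsAtomLabelling (G H : BinStruct σ) {X : Type*} (L : RbAtom G.V H.V → X → X → Prop) :
    Prop where
  exists_rel : ∀ a, ∃ x y, L a x y
  unique : ∀ {a b x y}, L a x y → L b x y → a = b
  conv : ∀ {a x y}, L a x y → L a.conv y x
  exists_comp : ∀ {a b x y z}, L a x y → L b y z → ∃ c, L c x z ∧ ¬ Forbidden G H a b c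
  exists_factor : ∀ {a b c x z}, L c x z → ¬ Forbidden G H a b c → ∃ y, L a x y ∧ L b y z

theorem CompletelyRepresentable.exists_isAtomLabelling {G H : BinStruct σ}
    (h : CompletelyRepresentable G H) :
    ∃ (X : Type) (L : RbAtom G.V H.V → X → X → Prop), IsAtomLabelling G H L := by
  obtain ⟨X, θ, hinj, hUnion, hcompl, hcomp, hconv, -⟩ := h
  have mem_comp {a b : RbAtom G.V H.V} {x z : X} :
      (∃ c, (x, z) ∈ θ {c} ∧ ¬ Forbidden G H a b c) ↔
        ∃ y, (x, y) ∈ θ {a} ∧ (y, z) ∈ θ {b} :=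
    calc
      _ ↔ ∃ c ∈ rbComp G H {a} {b}, (x, z) ∈ θ {c} := by
        simp only [mem_rbComp_singleton, and_comm]
      _ ↔ (x, z) ∈ θ (rbComp G H {a} {b}) := (mem_map_iff_exists_mem_map_singleton hUnion).symm
      _ ↔ _ := by rw [hcomp, Set.mem_ofPred_eq]
  refine ⟨X, fun a x y => (x, y) ∈ θ {a}, ?_, ?_, ?_, ?_, ?_⟩
  · intro a
    obtain ⟨⟨x, y⟩, hxy⟩ := map_singleton_nonempty hinj hUnion a
    exact ⟨x, y, hxy⟩
  · exact eq_of_mem_map_singleton hUnion hcompl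
  · intro a x y hxy
    rwa [← rbConv_singleton_conv a, hconv] at hxy
  · exact fun hxy hyz => mem_comp.2 ⟨_, hxy, hyz⟩
  · exact fun hxz habc => mem_comp.1 ⟨_, hxz, habc⟩

section Cone

variable {G H : BinStruct σ} {X : Type*} {L : RbAtom G.V H.V → X → X → Prop}

/-- The points `z k` form the cone over `G` with green apex `p` and yellow apex `q`. -/
def IsCone (L : RbAtom G.V H.V → X → X → Prop) (p q : X) (z : G.V → X) : Prop :=
  ∀ k, L (.green k) p (z k) ∧ L .yellow (z k) q

theorem IsCone.update [DecidableEq G.V] {p q x : X} {z : G.V → X} {k : G.V} (hz : IsCone L p q z)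
    (hgreen : L (.green k) p x) (hyellow : L .yellow x q) :
    IsCone L p q (Function.update z k x) :=
  (Function.forall_update_iff z fun l y => L (.green l) p y ∧ L .yellow y q).2
    ⟨⟨hgreen, hyellow⟩, fun l _ => hz l⟩

namespace IsAtomLabelling

theorem not_forbidden (hL : IsAtomLabelling G H L) {a b c : RbAtom G.V H.V} {x y z : X}
    (hxy : L a x y) (hyz : L b y z) (hxz : L c x z) : ¬ Forbidden G H a b c := by
  obtain ⟨c', hxz', hc'⟩ := hL.exists_comp hxy hyz
  rwa [hL.unique hxz hxz']

theorem exists_isCone (hL : IsAtomLabelling G H L) {i i' : G.V} {j j' : H.V} {u v : X}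
    (hne : i ≠ i') (hp : PartialHom2 G H i i' j j') (huv : L (.red j j') u v) :
    ∃ p q z, IsCone L p q z ∧ z i = u ∧ z i' = v := by
  classical
  obtain ⟨p, hup, hpv⟩ := hL.exists_factor huv (not_forbidden_green_green_red_iff.2 ⟨hne, hp⟩)
  obtain ⟨q, huq, hqv⟩ := hL.exists_factor huv (not_forbidden_yellow_yellow_red j j')
  have hpu : L (.green i) p u := hL.conv hup
  have hvq : L .yellow v q := hL.conv hqv
  obtain ⟨c, hpq, hc⟩ := hL.exists_comp hpu huq
  have hcid : c ≠ .id := not_forbidden_green_yellow_iff.1 hc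
  have hfill (k : G.V) : ∃ x, L (.green k) p x ∧ L .yellow x q :=
    hL.exists_factor hpq (not_forbidden_green_yellow_iff.2 hcid)
  choose w hw using hfill
  have hcone : IsCone L p q (Function.update (Function.update w i u) i' v) :=
    (IsCone.update hw hpu huq).update hpv hvq
  refine ⟨p, q, _, hcone, ?_, Function.update_self ..⟩
  rw [Function.update_of_ne hne, Function.update_self]

theorem exists_red_of_isCone (hL : IsAtomLabelling G H L) {p q : X} {z : G.V → X}
    (hz : IsCone L p q z) {k l : G.V} (hkl : k ≠ l) : ∃ a b, L (.red a b) (z k) (z l) := by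
  have hkp : L (.green k) (z k) p := hL.conv (hz k).1
  have hql : L .yellow q (z l) := hL.conv (hz l).2
  obtain ⟨c, hc, hgreen⟩ := hL.exists_comp hkp (hz l).1
  obtain ⟨a, b, rfl⟩ :=
    exists_eq_red_of_not_forbidden hkl hgreen (hL.not_forbidden (hz k).2 hql hc)
  exact ⟨a, b, hc⟩

theorem partialHom2_of_isCone (hL : IsAtomLabelling G H L) {p q : X} {z : G.V → X}
    (hz : IsCone L p q z) {k l : G.V} {a b : H.V} (hkl : L (.red a b) (z k) (z l)) :
    PartialHom2 G H k l a b :=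
  have hkp : L (.green k) (z k) p := hL.conv (hz k).1
  (not_forbidden_green_green_red_iff.1 (hL.not_forbidden hkp (hz l).1 hkl)).2

theorem exists_red_source (hL : IsAtomLabelling G H L) {ι : Type*} [Nontrivial ι] {z : ι → X}
    (hz : Pairwise fun k l => ∃ a b, L (.red a b) (z k) (z l)) (k : ι) :
    ∃ a, ∀ l, k ≠ l → ∃ b, L (.red a b) (z k) (z l) := by
  obtain ⟨m, hm⟩ := exists_ne k
  obtain ⟨a, b, hkm⟩ := hz hm.symm
  refine ⟨a, fun l hkl => ?_⟩
  rcases eq_or_ne m l with rfl | hml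
  · exact ⟨b, hkm⟩
  obtain ⟨a', b', hkl'⟩ := hz hkl
  obtain ⟨c, d, hml'⟩ := hz hml
  obtain ⟨rfl, -, -⟩ := eq_and_eq_and_eq_of_not_forbidden_red (hL.not_forbidden hkm hml' hkl')
  exact ⟨b', hkl'⟩

theorem exists_red_subscript (hL : IsAtomLabelling G H L) {ι : Type*} [Nontrivial ι] {z : ι → X}
    (hz : Pairwise fun k l => ∃ a b, L (.red a b) (z k) (z l)) :
    ∃ f : ι → H.V, Pairwise fun k l => L (.red (f k) (f l)) (z k) (z l) := by
  choose f hf using hL.exists_red_source hz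
  refine ⟨f, fun k l hkl => ?_⟩
  obtain ⟨b, hb⟩ := hf k l hkl
  obtain ⟨b', hb'⟩ := hf l k hkl.symm
  have hconv : L (.red b' (f l)) (z k) (z l) := hL.conv hb'
  rwa [(RbAtom.red.inj (hL.unique hb hconv)).2] at hb

end IsAtomLabelling

end Cone

theorem completelyRepresentable_extends {σ : Type} (G H : BinStruct σ)
    (h : CompletelyRepresentable G H) :
    ∀ (i i' : G.V) (j j' : H.V), i ≠ i' → PartialHom2 G H i i' j j' →
      ∃ f : G.V → H.V, IsHom G H f ∧ f i = j ∧ f i' = j' := by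
  intro i i' j j' hne hp
  obtain ⟨X, L, hL⟩ := h.exists_isAtomLabelling
  obtain ⟨u, v, huv⟩ := hL.exists_rel (.red j j')
  obtain ⟨p, q, z, hz, rfl, rfl⟩ := hL.exists_isCone hne hp huv
  have : Nontrivial G.V := ⟨i, i', hne⟩
  obtain ⟨f, hf⟩ := hL.exists_red_subscript fun _ _ => hL.exists_red_of_isCone hz
  have hom : IsHom G H f := fun b k l hkl => (hL.partialHom2_of_isCone hz (hf hkl) b).1
  exact ⟨f, hom, RbAtom.red.inj (hL.unique (hf hne) huv)⟩
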